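/- For k = 5 and every input list L, First Fit with cardinality constraint k satisfies FF(L) ≤ (32/15)·OPT(L) + 4. Consequently, the asymptotic competitive ratio of First Fit for k = 5 is at most 32/15. -/

import Mathlib

/-!
A weighting argument with a potential. An item of size `x` gets weight `1 / 5 + bonus x`.

A bin of a feasible packing weighs at most `32 / 15`. If it has an item larger than `1 / 2`, that
item has bonus `4 / 5`, and the at most four items in the remaining space have total bonus at most
`1 / 3`, because `bonus` is superadditive on `[0, 1 / 4]` and `bonus x + bonus (1 / 2 - x) = 1 / 3`
on `(1 / 4, 1 / 2]`. Otherwise at most three items exceed `1 / 4`, with bonus at most `1 / 3` each,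
and the others have bonus at most `1 / 15`.

A First Fit bin with five items weighs at least `1`. A bin with fewer items rejects the items of
later bins only for lack of room. So if `M` is the least size of the bins with fewer than five items
among those before a bin `B`, all items of `B` exceed `1 - M`, and what the weight of `B` lacks to
`1` is covered by the decrease of a potential of `M`, which ranges over `[0, 12 / 5]`.
-/

open scoped Classical
noncomputable section

/-- An input is a list of item sizes, each in (0,1]. -/
def ValidInput (L : List ℝ) : Prop := ∀ x ∈ L, 0 < x ∧ x ≤ 1

/-- A packing assigns a bin index to each item; it is feasible for cardinality
constraint `k` if every bin receives at most `k` items of total size at most 1. -/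
def IsFeasible (k : ℕ) (L : List ℝ) (f : Fin L.length → ℕ) : Prop :=
  ∀ b : ℕ,
    (Finset.univ.filter (fun i => f i = b)).card ≤ k ∧
    ∑ i ∈ Finset.univ.filter (fun i => f i = b), L.get i ≤ 1

/-- The number of bins used by a packing. -/
def binsUsed (L : List ℝ) (f : Fin L.length → ℕ) : ℕ :=
  (Finset.univ.image f).card

/-- The optimal (minimum) number of bins in a feasible packing of `L`. -/
def OPT (k : ℕ) (L : List ℝ) : ℕ :=
  sInf {n | ∃ f : Fin L.length → ℕ, IsFeasible k L f ∧ binsUsed L f = n}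

/-- A deterministic online algorithm is a strategy: given the items seen so far
(ending with the item to be packed), it returns the bin index for that item. -/
def onlinePacking (A : List ℝ → ℕ) (L : List ℝ) : Fin L.length → ℕ :=
  fun i => A (L.take (i.1 + 1))

/-- The strategy `A` is a valid online algorithm for cardinality constraint `k`
if on every valid input the induced packing is feasible. -/
def OnlineValid (k : ℕ) (A : List ℝ → ℕ) : Prop :=
  ∀ L : List ℝ, ValidInput L → IsFeasible k L (onlinePacking A L)

/-- The number of bins used by online algorithm `A` on input `L`. -/
def onlineBins (A : List ℝ → ℕ) (L : List ℝ) : ℕ :=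
  binsUsed L (onlinePacking A L)

/-- The state of First Fit: a list of open bins (in order of opening),
each recorded as (number of items, total size). `ffFind` returns the index of
the first bin that can receive an item of size `x` (it has at most `k-1` items
and the item fits); if none, the index of a new bin. -/
def ffFind (k : ℕ) (x : ℝ) : List (ℕ × ℝ) → ℕ
  | [] => 0
  | b :: bs => if b.1 < k ∧ b.2 + x ≤ 1 then 0 else ffFind k x bs + 1

/-- Update the First Fit state after packing an item of size `x`. -/
def ffUpdate (k : ℕ) (x : ℝ) : List (ℕ × ℝ) → List (ℕ × ℝ)
  | [] => [(1, x)]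
  | b :: bs =>
      if b.1 < k ∧ b.2 + x ≤ 1 then (b.1 + 1, b.2 + x) :: bs
      else b :: ffUpdate k x bs

/-- The final state of First Fit with cardinality constraint `k` on input `L`. -/
def ffState (k : ℕ) (L : List ℝ) : List (ℕ × ℝ) :=
  L.foldl (fun bs x => ffUpdate k x bs) []

/-- The number of bins used by First Fit with cardinality constraint `k` on `L`. -/
def FF (k : ℕ) (L : List ℝ) : ℕ := (ffState k L).length

/-- The bin index into which First Fit packs the `i`-th item of `L`. -/
def ffAssign (k : ℕ) (L : List ℝ) (i : Fin L.length) : ℕ :=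
  ffFind k (L.get i) (ffState k (L.take i.1))

/-! ### First Fit bins with their contents -/

/-- First Fit insertion of an item into a list of bins given by their contents. It refines
`ffUpdate`, which only remembers item counts and total sizes. -/
def ffPlace (k : ℕ) (x : ℝ) : List (Multiset ℝ) → List (Multiset ℝ)
  | [] => [{x}]
  | B :: bs => if B.card < k ∧ B.sum + x ≤ 1 then (x ::ₘ B) :: bs else B :: ffPlace k x bs

/-- The contents of the bins opened by First Fit on `L`, in order of opening. -/
def ffBins (k : ℕ) (L : List ℝ) : List (Multiset ℝ) :=
  L.foldl (fun bs x => ffPlace k x bs) []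

/-- What `ffState` records of a bin: its item count and total size. -/
def binSummary (B : Multiset ℝ) : ℕ × ℝ := (B.card, B.sum)

/-- No item of `C` fits into the bin `B`, unless `B` already holds `k` items. Here `C` is a later
bin, or the union of all later bins. -/
def Blocks (k : ℕ) (B C : Multiset ℝ) : Prop := B.card < k → ∀ x ∈ C, 1 < B.sum + x

section FirstFit

variable {k : ℕ} {x : ℝ} {L : List ℝ} {bs : List (Multiset ℝ)}

lemma ffBins_concat : ffBins k (L ++ [x]) = ffPlace k x (ffBins k L) := by
  simp only [ffBins, List.foldl_append, List.foldl_cons, List.foldl_nil]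

lemma map_binSummary_ffPlace (k : ℕ) (x : ℝ) (bs : List (Multiset ℝ)) :
    (ffPlace k x bs).map binSummary = ffUpdate k x (bs.map binSummary) := by
  induction bs with
  | nil => simp [ffPlace, ffUpdate, binSummary]
  | cons B bs ih =>
    simp only [ffPlace, ffUpdate, List.map_cons, binSummary]
    split_ifs
    · simp [binSummary, add_comm]
    · simp [binSummary, ih]

lemma map_binSummary_ffBins (k : ℕ) (L : List ℝ) : (ffBins k L).map binSummary = ffState k L :=
  (List.foldl_hom (List.map binSummary) fun bs x => (map_binSummary_ffPlace k x bs).symm).symm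

lemma length_ffBins (k : ℕ) (L : List ℝ) : (ffBins k L).length = FF k L := by
  rw [FF, ← map_binSummary_ffBins, List.length_map]

lemma sum_ffPlace (k : ℕ) (x : ℝ) (bs : List (Multiset ℝ)) :
    (ffPlace k x bs).sum = x ::ₘ bs.sum := by
  induction bs with
  | nil => simp [ffPlace]
  | cons B bs ih => simp only [ffPlace]; split_ifs <;> simp [ih]

lemma sum_ffBins (k : ℕ) (L : List ℝ) : (ffBins k L).sum = (L : Multiset ℝ) := by
  induction L using List.reverseRecOn with
  | nil => rfl
  | append_singleton L x ih =>
    rw [ffBins_concat, sum_ffPlace, ih, Multiset.cons_coe, Multiset.coe_eq_coe]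
    exact (List.perm_append_singleton x L).symm

lemma zero_notMem_ffPlace (h : 0 ∉ bs) : 0 ∉ ffPlace k x bs := by
  induction bs with
  | nil => simp [ffPlace]
  | cons B bs ih =>
    obtain ⟨hB, hbs⟩ := List.ne_and_not_mem_of_not_mem_cons h
    simp only [ffPlace]
    split_ifs
    · simp [hbs, eq_comm]
    · simp [hB, ih hbs]

lemma zero_notMem_ffBins : 0 ∉ ffBins k L := by
  induction L using List.reverseRecOn with
  | nil => exact List.not_mem_nil
  | append_singleton L x ih => exact ffBins_concat ▸ zero_notMem_ffPlace ih

lemma forall_blocks_iff_blocks_sum {B : Multiset ℝ} :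
    (∀ C ∈ bs, Blocks k B C) ↔ Blocks k B bs.sum := by
  induction bs with
  | nil => simp [Blocks]
  | cons C bs ih =>
    rw [List.forall_mem_cons, ih]
    simp only [List.sum_cons, Blocks, Multiset.mem_add, or_imp, forall_and]

lemma pairwise_blocks_ffPlace (hx : 0 ≤ x) (h : bs.Pairwise (Blocks k)) :
    (ffPlace k x bs).Pairwise (Blocks k) := by
  induction bs with
  | nil => exact List.pairwise_singleton _ _
  | cons B bs ih =>
    obtain ⟨hB, hbs⟩ := List.pairwise_cons.mp h
    simp only [ffPlace]
    split_ifs with hfit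
    · refine List.pairwise_cons.mpr ⟨fun C hC _ y hy => ?_, hbs⟩
      rw [Multiset.sum_cons]
      linarith [hB C hC hfit.1 y hy]
    · refine List.pairwise_cons.mpr ⟨forall_blocks_iff_blocks_sum.mpr fun hlt y hy => ?_, ih hbs⟩
      rw [sum_ffPlace] at hy
      rcases Multiset.mem_cons.mp hy with rfl | hy
      · exact not_le.mp fun hle => hfit ⟨hlt, hle⟩
      · exact forall_blocks_iff_blocks_sum.mp hB hlt y hy

lemma pairwise_blocks_ffBins (hL : ∀ x ∈ L, 0 ≤ x) : (ffBins k L).Pairwise (Blocks k) := by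
  induction L using List.reverseRecOn with
  | nil => exact List.Pairwise.nil
  | append_singleton L x ih =>
    rw [ffBins_concat]
    exact pairwise_blocks_ffPlace (hL x (by simp)) (ih fun y hy => hL y (by simp [hy]))

end FirstFit

/-! ### The weighting method -/

/-- `Φ` is a potential for the item weight `w` under First Fit with at most `k` items per bin: every
bin weighs at least `1`, up to the decrease of `Φ M`, where `M` is the least size of the bins with
fewer than `k` items met so far. -/
structure IsPotential (k : ℕ) (w Φ : ℝ → ℝ) : Prop where
  nonneg : ∀ M, 0 ≤ M → 0 ≤ Φ M
  one_le_of_full : ∀ B : Multiset ℝ, k ≤ B.card → 1 ≤ (B.map w).sum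
  one_le_of_not_full : ∀ (M : ℝ) (B : Multiset ℝ), B ≠ 0 → B.card < k → (∀ x ∈ B, 1 - M < x) →
    1 ≤ (B.map w).sum + (Φ M - Φ (min M B.sum))

section Weighting

variable {k : ℕ} {w Φ : ℝ → ℝ} {ρ : ℝ} {L : List ℝ}

lemma IsPotential.length_le (h : IsPotential k w Φ) {bs : List (Multiset ℝ)} {M : ℝ} (hM : 0 ≤ M)
    (hbs : bs.Pairwise (Blocks k)) (hne : 0 ∉ bs) (hnn : ∀ x ∈ bs.sum, 0 ≤ x)
    (hgt : ∀ x ∈ bs.sum, 1 - M < x) : (bs.length : ℝ) ≤ (bs.sum.map w).sum + Φ M := by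
  induction bs generalizing M with
  | nil => simpa using h.nonneg M hM
  | cons B bs ih =>
    obtain ⟨hB, hbs⟩ := List.pairwise_cons.mp hbs
    obtain ⟨hB0, hne⟩ := List.ne_and_not_mem_of_not_mem_cons hne
    simp only [List.sum_cons, Multiset.mem_add, or_imp, forall_and] at hnn hgt
    simp only [List.length_cons, Nat.cast_succ, List.sum_cons, Multiset.map_add, Multiset.sum_add]
    rcases lt_or_ge B.card k with hlt | hge
    · have hlater : ∀ x ∈ bs.sum, 1 - min M B.sum < x := fun x hx => by
        have hout := forall_blocks_iff_blocks_sum.mp hB hlt x hx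
        rw [sub_lt_comm, lt_min_iff]
        exact ⟨by linarith [hgt.2 x hx], by linarith⟩
      have hrest := ih (le_min hM (Multiset.sum_nonneg hnn.1)) hbs hne hnn.2 hlater
      linarith [h.one_le_of_not_full M B (Ne.symm hB0) hlt hgt.1]
    · linarith [ih hM hbs hne hnn.2 hgt.2, h.one_le_of_full B hge]

theorem IsPotential.FF_le (h : IsPotential k w Φ) (hL : ∀ x ∈ L, 0 < x) :
    (FF k L : ℝ) ≤ (L.map w).sum + Φ 1 := by
  have hnn : ∀ x ∈ L, 0 ≤ x := fun x hx => (hL x hx).le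
  have hlen := h.length_le zero_le_one (pairwise_blocks_ffBins hnn) (zero_notMem_ffBins (L := L))
    (by simpa [sum_ffBins] using hnn) (by simpa [sum_ffBins] using hL)
  simpa only [length_ffBins, sum_ffBins, Multiset.map_coe, Multiset.sum_coe] using hlen

lemma exists_isFeasible_binsUsed_eq_OPT (hk : 0 < k) (hL : ∀ x ∈ L, x ≤ 1) :
    ∃ f : Fin L.length → ℕ, IsFeasible k L f ∧ binsUsed L f = OPT k L := by
  -- One item per bin is a feasible packing, so the infimum is over a nonempty set.
  refine Nat.sInf_mem (s := {n | ∃ f : Fin L.length → ℕ, IsFeasible k L f ∧ binsUsed L f = n})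
    ⟨_, fun i => i, fun b => ?_, rfl⟩
  have hcard : (Finset.univ.filter fun i : Fin L.length => (i : ℕ) = b).card ≤ 1 :=
    Finset.card_le_one.mpr fun i hi j hj =>
      Fin.ext ((Finset.mem_filter.mp hi).2.trans (Finset.mem_filter.mp hj).2.symm)
  refine ⟨hcard.trans hk, ?_⟩
  calc ∑ i ∈ Finset.univ.filter fun i : Fin L.length => (i : ℕ) = b, L.get i
      ≤ (Finset.univ.filter fun i : Fin L.length => (i : ℕ) = b).card • (1 : ℝ) :=
        Finset.sum_le_card_nsmul _ _ _ fun i _ => hL _ (L.get_mem i)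
    _ ≤ 1 := by rw [nsmul_one]; exact_mod_cast hcard

lemma sum_map_le_mul_binsUsed {f : Fin L.length → ℕ} (hf : IsFeasible k L f)
    (hw : ∀ B : Multiset ℝ, (∀ x ∈ B, x ∈ L) → B.card ≤ k → B.sum ≤ 1 → (B.map w).sum ≤ ρ) :
    (L.map w).sum ≤ ρ * binsUsed L f := by
  have hbin : ∀ b ∈ Finset.univ.image f, ∑ i with f i = b, w (L.get i) ≤ ρ := fun b _ => by
    obtain ⟨hcard, hsum⟩ := hf b
    have hB := hw ((Finset.univ.filter fun i => f i = b).val.map L.get)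
      (fun x hx => by obtain ⟨i, -, rfl⟩ := Multiset.mem_map.mp hx; exact L.get_mem i)
      (by rwa [Multiset.card_map]) hsum
    rwa [Multiset.map_map] at hB
  calc (L.map w).sum = ∑ i, w (L.get i) := (Fin.sum_univ_fun_getElem L w).symm
    _ = ∑ b ∈ Finset.univ.image f, ∑ i with f i = b, w (L.get i) :=
        (Finset.sum_fiberwise_of_maps_to
          (fun i _ => Finset.mem_image_of_mem f (Finset.mem_univ i)) _).symm
    _ ≤ (Finset.univ.image f).card • ρ := Finset.sum_le_card_nsmul _ _ _ hbin
    _ = ρ * binsUsed L f := by rw [nsmul_eq_mul, mul_comm, binsUsed]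

theorem IsPotential.FF_le_mul_OPT_add (h : IsPotential k w Φ) (hk : 0 < k) (hL : ValidInput L)
    (hw : ∀ B : Multiset ℝ, (∀ x ∈ B, 0 < x) → B.card ≤ k → B.sum ≤ 1 → (B.map w).sum ≤ ρ) :
    (FF k L : ℝ) ≤ ρ * OPT k L + Φ 1 := by
  have hpos : ∀ x ∈ L, 0 < x := fun x hx => (hL x hx).1
  obtain ⟨f, hf, hopt⟩ := exists_isFeasible_binsUsed_eq_OPT hk fun x hx => (hL x hx).2
  calc (FF k L : ℝ) ≤ (L.map w).sum + Φ 1 := h.FF_le hpos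
    _ ≤ ρ * binsUsed L f + Φ 1 := by
        gcongr
        exact sum_map_le_mul_binsUsed hf fun B hB => hw B fun x hx => hpos x (hB x hx)
    _ = ρ * OPT k L + Φ 1 := by rw [hopt]

end Weighting

/-! ### The bonus function -/

/-- The bonus of an item of size at most `1 / 4`: a ramp from `0` at `5 / 48` to `1 / 15` at
`11 / 48`, constant outside. -/
def smallBonus (x : ℝ) : ℝ := max 0 (min (1 / 15) (8 / 15 * (x - 5 / 48)))

/-- The part of the weight of an item that depends on its size `x`. The value on `(1 / 4, 1 / 2]`
makes the bonuses of `x` and `1 / 2 - x` add up to `1 / 3`. -/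
def bonus (x : ℝ) : ℝ :=
  if 1 / 2 < x then 4 / 5 else if 1 / 4 < x then 1 / 3 - smallBonus (1 / 2 - x) else smallBonus x

/-- The weight of an item of size `x`: a feasible bin weighs at most `32 / 15`, and First Fit bins
weigh on average at least `1`, up to a constant total. -/
def weight (x : ℝ) : ℝ := 1 / 5 + bonus x

section Bonus

variable {x : ℝ}

lemma smallBonus_nonneg (x : ℝ) : 0 ≤ smallBonus x := le_max_left _ _

lemma smallBonus_le (x : ℝ) : smallBonus x ≤ 1 / 15 := max_le (by norm_num) (min_le_left _ _)

lemma smallBonus_mono : Monotone smallBonus := fun x y h => by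
  unfold smallBonus
  gcongr

lemma smallBonus_eq_zero (h : x ≤ 5 / 48) : smallBonus x = 0 :=
  max_eq_left ((min_le_right _ _).trans (by linarith))

lemma smallBonus_eq_of_ge (h : 11 / 48 ≤ x) : smallBonus x = 1 / 15 := by
  rw [smallBonus, min_eq_left (by linarith), max_eq_right (by norm_num)]

lemma smallBonus_le_ramp (h : 5 / 48 ≤ x) : smallBonus x ≤ 8 / 15 * (x - 5 / 48) :=
  max_le (by linarith) (min_le_right _ _)

lemma ramp_le_smallBonus (h : x ≤ 11 / 48) : 8 / 15 * (x - 5 / 48) ≤ smallBonus x := by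
  rw [smallBonus, min_eq_right (by linarith)]
  exact le_max_right _ _

lemma bonus_of_half_lt (h : 1 / 2 < x) : bonus x = 4 / 5 := if_pos h

lemma bonus_of_le_half (h : 1 / 4 < x) (h' : x ≤ 1 / 2) :
    bonus x = 1 / 3 - smallBonus (1 / 2 - x) := by
  rw [bonus, if_neg h'.not_gt, if_pos h]

lemma bonus_of_le_quarter (h : x ≤ 1 / 4) : bonus x = smallBonus x := by
  rw [bonus, if_neg (by linarith), if_neg h.not_gt]

lemma le_bonus_of_quarter_lt (h : 1 / 4 < x) : 4 / 15 ≤ bonus x := by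
  rcases le_or_gt x (1 / 2) with h' | h'
  · rw [bonus_of_le_half h h']
    linarith [smallBonus_le (1 / 2 - x)]
  · rw [bonus_of_half_lt h']
    norm_num

lemma bonus_le_of_le_half (h : 1 / 4 < x) (h' : x ≤ 1 / 2) : bonus x ≤ 1 / 3 := by
  rw [bonus_of_le_half h h']
  linarith [smallBonus_nonneg (1 / 2 - x)]

lemma bonus_le_of_le_quarter (h : x ≤ 1 / 4) : bonus x ≤ 1 / 15 :=
  (bonus_of_le_quarter h).trans_le (smallBonus_le x)

lemma bonus_nonneg (x : ℝ) : 0 ≤ bonus x := by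
  rcases le_or_gt x (1 / 4) with h | h
  · exact (bonus_of_le_quarter h).symm ▸ smallBonus_nonneg x
  · linarith [le_bonus_of_quarter_lt h]

lemma sum_map_bonus_nonneg (B : Multiset ℝ) : 0 ≤ (B.map bonus).sum :=
  Multiset.sum_nonneg <| Multiset.forall_mem_map_iff.mpr fun x _ => bonus_nonneg x

lemma sum_map_bonus_of_le_quarter {B : Multiset ℝ} (h : ∀ x ∈ B, x ≤ 1 / 4) :
    (B.map bonus).sum = (B.map smallBonus).sum := by
  rw [Multiset.map_congr rfl fun x hx => bonus_of_le_quarter (h x hx)]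

lemma sum_map_weight (B : Multiset ℝ) :
    (B.map weight).sum = B.card / 5 + (B.map bonus).sum := by
  unfold weight
  rw [Multiset.sum_map_add, Multiset.map_const', Multiset.sum_replicate, nsmul_eq_mul]
  ring

end Bonus

/-! ### Weight of a feasible bin -/

lemma smallBonus_add_le {x y : ℝ} (hx : 0 ≤ x) (hy : 0 ≤ y) (h : x + y ≤ 1 / 4) :
    smallBonus x + smallBonus y ≤ smallBonus (x + y) := by
  rcases le_total x (5 / 48) with hx' | hx'
  · rw [smallBonus_eq_zero hx', zero_add]
    exact smallBonus_mono (by linarith)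
  rcases le_total y (5 / 48) with hy' | hy'
  · rw [smallBonus_eq_zero hy', add_zero]
    exact smallBonus_mono (by linarith)
  have hsum := add_le_add (smallBonus_le_ramp hx') (smallBonus_le_ramp hy')
  rcases le_total (x + y) (11 / 48) with hxy | hxy
  · linarith [ramp_le_smallBonus hxy]
  · rw [smallBonus_eq_of_ge hxy]
    linarith

lemma sum_map_smallBonus_le {B : Multiset ℝ} (hB : ∀ x ∈ B, 0 ≤ x) (hsum : B.sum ≤ 1 / 4) :
    (B.map smallBonus).sum ≤ smallBonus B.sum := by
  induction B using Multiset.induction with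
  | empty => exact smallBonus_nonneg _
  | cons x B ih =>
    obtain ⟨hx, hB⟩ := Multiset.forall_mem_cons.mp hB
    rw [Multiset.sum_cons] at hsum
    have hB0 := Multiset.sum_nonneg hB
    rw [Multiset.map_cons, Multiset.sum_cons, Multiset.sum_cons]
    linarith [ih hB (by linarith), smallBonus_add_le hx hB0 hsum]

lemma sum_map_bonus_le_third {B : Multiset ℝ} (hB : ∀ x ∈ B, 0 ≤ x) (hcard : B.card ≤ 4)
    (hsum : B.sum < 1 / 2) : (B.map bonus).sum ≤ 1 / 3 := by
  by_cases hsmall : ∀ x ∈ B, x ≤ 1 / 4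
  · have hle := Multiset.sum_le_card_nsmul (B.map bonus) (1 / 15) <|
      Multiset.forall_mem_map_iff.mpr fun x hx => bonus_le_of_le_quarter (hsmall x hx)
    have hcard' : (B.card : ℝ) ≤ 4 := by exact_mod_cast hcard
    rw [Multiset.card_map, nsmul_eq_mul] at hle
    linarith
  · push Not at hsmall
    obtain ⟨a, ha, ha4⟩ := hsmall
    obtain ⟨D, rfl⟩ := Multiset.exists_cons_of_mem ha
    have hD := (Multiset.forall_mem_cons.mp hB).2
    rw [Multiset.sum_cons] at hsum
    have hD0 := Multiset.sum_nonneg hD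
    have hD4 : ∀ x ∈ D, x ≤ 1 / 4 := fun x hx => by linarith [Multiset.single_le_sum hD x hx]
    have hsub := sum_map_smallBonus_le hD (by linarith)
    have hmono : smallBonus D.sum ≤ smallBonus (1 / 2 - a) := smallBonus_mono (by linarith)
    rw [Multiset.map_cons, Multiset.sum_cons, sum_map_bonus_of_le_quarter hD4,
      bonus_of_le_half ha4 (by linarith)]
    linarith

lemma card_filter_quarter_lt_le_three {B : Multiset ℝ} (hB : ∀ x ∈ B, 0 ≤ x) (hsum : B.sum ≤ 1) :
    (B.filter (1 / 4 < ·)).card ≤ 3 := by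
  by_contra! hcard
  have hlt := Multiset.sum_lt_sum_of_nonempty (s := B.filter (1 / 4 < ·)) (f := fun _ => 1 / 4)
    (g := id) (Multiset.card_pos.mp (by lia)) fun x hx => (Multiset.mem_filter.mp hx).2
  have hrest := Multiset.sum_nonneg fun x hx =>
    hB x (Multiset.mem_of_mem_filter (p := fun x => ¬ 1 / 4 < x) hx)
  have hsplit := congrArg Multiset.sum (Multiset.filter_add_not (1 / 4 < ·) B)
  have hcard' : (4 : ℝ) ≤ (B.filter (1 / 4 < ·)).card := by exact_mod_cast hcard
  rw [Multiset.map_const', Multiset.sum_replicate, nsmul_eq_mul, Multiset.map_id] at hlt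
  rw [Multiset.sum_add] at hsplit
  linarith

lemma sum_map_bonus_le_of_le_half {B : Multiset ℝ} (h : ∀ x ∈ B, x ≤ 1 / 2) :
    (B.map bonus).sum ≤ B.card / 15 + 4 / 15 * (B.filter (1 / 4 < ·)).card := by
  induction B using Multiset.induction with
  | empty => simp
  | cons x B ih =>
    obtain ⟨hx, hB⟩ := Multiset.forall_mem_cons.mp h
    have hrest := ih hB
    rw [Multiset.map_cons, Multiset.sum_cons, Multiset.card_cons, Multiset.filter_cons]
    split_ifs with hx4
    · have := bonus_le_of_le_half hx4 hx
      push_cast [Multiset.card_add, Multiset.card_singleton]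
      linarith
    · have := bonus_le_of_le_quarter (not_lt.mp hx4)
      push_cast [Multiset.card_add, Multiset.card_zero]
      linarith

lemma sum_map_bonus_le {B : Multiset ℝ} (hB : ∀ x ∈ B, 0 ≤ x) (hcard : B.card ≤ 5)
    (hsum : B.sum ≤ 1) : (B.map bonus).sum ≤ 17 / 15 := by
  by_cases hhalf : ∀ x ∈ B, x ≤ 1 / 2
  · have hlarge : ((B.filter (1 / 4 < ·)).card : ℝ) ≤ 3 := by
      exact_mod_cast card_filter_quarter_lt_le_three hB hsum
    have hcard' : (B.card : ℝ) ≤ 5 := by exact_mod_cast hcard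
    linarith [sum_map_bonus_le_of_le_half hhalf]
  · push Not at hhalf
    obtain ⟨a, ha, ha2⟩ := hhalf
    obtain ⟨D, rfl⟩ := Multiset.exists_cons_of_mem ha
    rw [Multiset.card_cons] at hcard
    rw [Multiset.sum_cons] at hsum
    rw [Multiset.map_cons, Multiset.sum_cons, bonus_of_half_lt ha2]
    linarith [sum_map_bonus_le_third (Multiset.forall_mem_cons.mp hB).2 (by lia) (by linarith)]

lemma sum_map_weight_le {B : Multiset ℝ} (hB : ∀ x ∈ B, 0 ≤ x) (hcard : B.card ≤ 5)
    (hsum : B.sum ≤ 1) : (B.map weight).sum ≤ 32 / 15 := by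
  have hcard' : (B.card : ℝ) ≤ 5 := by exact_mod_cast hcard
  rw [sum_map_weight]
  linarith [sum_map_bonus_le hB hcard hsum]

/-! ### Weight of a First Fit bin -/

/-- The potential of the least size `M` of the bins with fewer than five items met so far. The
jumps pay for two kinds of bins, each met at most once: those consisting of one item of size at most
`1 / 2`, and those of two or three items that have an item of size at most `1 / 4` and total size at
most `3 / 4`. -/
def potential (M : ℝ) : ℝ :=
  M + (if 3 / 4 < M then 3 / 5 else 0) + (if 1 / 2 < M then 4 / 5 else 0)

lemma potential_one : potential 1 = 12 / 5 := by norm_num [potential]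

lemma potential_nonneg {M : ℝ} (h : 0 ≤ M) : 0 ≤ potential M := by
  unfold potential
  positivity

lemma sub_le_potential_sub {M M' : ℝ} (h : M' ≤ M) : M - M' ≤ potential M - potential M' := by
  unfold potential
  split_ifs <;> linarith

lemma potential_mono : Monotone potential := fun M' M h => by
  linarith [sub_le_potential_sub h]

lemma four_fifths_le_potential_sub {M M' : ℝ} (h : M' ≤ 1 / 2) (hM : 1 / 2 < M) :
    4 / 5 ≤ potential M - potential M' := by
  unfold potential
  split_ifs <;> linarith

lemma three_fifths_le_potential_sub {M M' : ℝ} (h : M' ≤ 3 / 4) (hM : 3 / 4 < M) :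
    3 / 5 ≤ potential M - potential M' := by
  unfold potential
  split_ifs <;> linarith

section SmallItems

variable {t δ p : ℝ}

-- After multiplication by `m + 1`, the case `p ≤ 5 / 48` reduces to `(m - 2) * (m - 3) ≥ 0`: the
-- slope and the position of the ramp are determined by equality for `m = 2` and `m = 3`.
lemma add_smallBonus_le_ramp_add {m : ℕ} {s : ℝ} (hm : 1 ≤ m) (hs : m * t ≤ s) (hδ : 0 ≤ δ)
    (hp : 0 ≤ p) (hp' : p ≤ 1 / 4) (h : m / 4 + p ≤ s + t + δ) :
    (m - 1) / 15 + smallBonus p ≤ 8 / 15 * (s - 5 / 48 * m) + δ := by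
  have hm' : (1 : ℝ) ≤ m := by exact_mod_cast hm
  have hmδ : 0 ≤ m * δ := by positivity
  have hmp : 0 ≤ m * p := by positivity
  have hs' : m * (m / 4 + p - δ) ≤ (m + 1) * s := by
    linarith [mul_le_mul_of_nonneg_left h (Nat.cast_nonneg m)]
  refine le_of_mul_le_mul_left ?_ (by positivity : (0 : ℝ) < m + 1)
  rcases le_total p (5 / 48) with hp0 | hp0
  · have hroots : (0 : ℝ) ≤ (m - 2) * (m - 3) := by
      rcases le_or_gt m 2 with h2 | h2
      · have : (m : ℝ) ≤ 2 := by exact_mod_cast h2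
        exact mul_nonneg_of_nonpos_of_nonpos (by linarith) (by linarith)
      · have : (3 : ℝ) ≤ m := by exact_mod_cast h2
        exact mul_nonneg (by linarith) (by linarith)
    rw [smallBonus_eq_zero hp0]
    linarith
  · have hramp := mul_le_mul_of_nonneg_left (smallBonus_le_ramp hp0)
      (by positivity : (0 : ℝ) ≤ m + 1)
    have hsq : (1 : ℝ) ≤ m * m := one_le_mul_of_one_le_of_one_le hm' hm'
    linarith

lemma sum_map_ramp (B : Multiset ℝ) :
    (B.map fun x => 8 / 15 * (x - 5 / 48)).sum = 8 / 15 * (B.sum - 5 / 48 * B.card) := by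
  rw [Multiset.sum_map_mul_left, Multiset.sum_map_sub, Multiset.map_id', Multiset.map_const',
    Multiset.sum_replicate, nsmul_eq_mul, mul_comm (B.card : ℝ)]

-- Items on the plateau of `smallBonus` contribute `1 / 15` each and are removed one at a time.
lemma add_smallBonus_le_sum_map_add {B : Multiset ℝ} (hB : B ≠ 0) (ht : ∀ x ∈ B, t ≤ x)
    (h4 : ∀ x ∈ B, x ≤ 1 / 4) (hδ : 0 ≤ δ) (hp : 0 ≤ p) (hp' : p ≤ 1 / 4)
    (h : B.card / 4 + p ≤ B.sum + t + δ) :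
    (B.card - 1) / 15 + smallBonus p ≤ (B.map smallBonus).sum + δ := by
  induction B using Multiset.strongInductionOn with
  | ih B ih =>
    by_cases hplateau : ∃ x ∈ B, 11 / 48 ≤ x
    · obtain ⟨x, hx, hx'⟩ := hplateau
      obtain ⟨D, rfl⟩ := Multiset.exists_cons_of_mem hx
      obtain ⟨hx4, hD4⟩ := Multiset.forall_mem_cons.mp h4
      simp only [Multiset.card_cons, Nat.cast_succ, Multiset.sum_cons] at h
      simp only [Multiset.card_cons, Nat.cast_succ, Multiset.map_cons, Multiset.sum_cons,
        smallBonus_eq_of_ge hx']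
      rcases eq_or_ne D 0 with rfl | hD
      · norm_num
        linarith [smallBonus_le p]
      · linarith [ih D (Multiset.lt_cons_self D x) hD (Multiset.forall_mem_cons.mp ht).2 hD4
          (by linarith)]
    · push Not at hplateau
      have hcard : B.card * t ≤ B.sum := by
        simpa only [nsmul_eq_mul] using Multiset.card_nsmul_le_sum ht
      have hsum := Multiset.sum_map_le_sum_map (fun x => 8 / 15 * (x - 5 / 48)) smallBonus
        fun x hx => ramp_le_smallBonus (hplateau x hx).le
      rw [sum_map_ramp] at hsum
      linarith [add_smallBonus_le_ramp_add (Multiset.card_pos.mpr hB) hcard hδ hp hp' h]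

end SmallItems

section BonusLowerBound

variable {M a b : ℝ} {B D : Multiset ℝ}

lemma one_sub_card_div_five_le_of_forall_le_quarter (hB : B ≠ 0) (hcard : B.card < 5)
    (ht : ∀ x ∈ B, 1 - M < x) (h4 : ∀ x ∈ B, x ≤ 1 / 4) :
    1 - B.card / 5 ≤ (B.map bonus).sum + (potential M - potential (min M B.sum)) := by
  obtain ⟨x, hx⟩ := Multiset.exists_mem_of_ne_zero hB
  have hM : 3 / 4 < M := by linarith [ht x hx, h4 x hx]
  have hnn := sum_map_bonus_nonneg B
  have hsum : B.sum ≤ B.card * (1 / 4) := by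
    simpa only [nsmul_eq_mul] using Multiset.sum_le_card_nsmul B (1 / 4) h4
  have hmin := min_le_right M B.sum
  have hpos := Multiset.card_pos.mpr hB
  interval_cases hB4 : B.card
  · linarith [four_fifths_le_potential_sub (M := M) (M' := min M B.sum) (by linarith) (by linarith)]
  · linarith [three_fifths_le_potential_sub (M' := min M B.sum) (by linarith) hM]
  · linarith [three_fifths_le_potential_sub (M' := min M B.sum) (by linarith) hM]
  · have hsmall := add_smallBonus_le_sum_map_add (p := 0) hB (fun x hx => (ht x hx).le) h4
      (sub_nonneg.mpr (min_le_left M B.sum)) le_rfl (by norm_num) (by rw [hB4]; linarith)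
    rw [hB4, smallBonus_eq_zero (by norm_num)] at hsmall
    rw [sum_map_bonus_of_le_quarter h4]
    linarith [sub_le_potential_sub (min_le_left M B.sum)]

lemma one_sub_card_div_five_le_of_cons (hcard : (a ::ₘ D).card < 5)
    (ht : ∀ x ∈ a ::ₘ D, 1 - M < x) (ha : 1 / 4 < a) (ha2 : a ≤ 1 / 2)
    (h4 : ∀ x ∈ D, x ≤ 1 / 4) :
    1 - (a ::ₘ D).card / 5 ≤
      ((a ::ₘ D).map bonus).sum + (potential M - potential (min M (a ::ₘ D).sum)) := by
  obtain ⟨hta, htD⟩ := Multiset.forall_mem_cons.mp ht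
  have hnn := sum_map_bonus_nonneg D
  have hsum : D.sum ≤ D.card * (1 / 4) := by
    simpa only [nsmul_eq_mul] using Multiset.sum_le_card_nsmul D (1 / 4) h4
  have hlarge := le_bonus_of_quarter_lt ha
  simp only [Multiset.card_cons, Multiset.map_cons, Multiset.sum_cons] at hcard ⊢
  have hmin := min_le_right M (a + D.sum)
  have hdrop := sub_le_potential_sub (min_le_left M (a + D.sum))
  have hδ := sub_nonneg.mpr (min_le_left M (a + D.sum))
  have hD4 : D.card < 4 := by lia
  interval_cases hDcard : D.card <;> push_cast
  · linarith [four_fifths_le_potential_sub (M := M) (M' := min M (a + D.sum)) (by linarith)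
      (by linarith)]
  · obtain ⟨x, rfl⟩ := Multiset.card_eq_one.mp hDcard
    have hM : 3 / 4 < M := by linarith [htD x (by simp), h4 x (by simp)]
    linarith [three_fifths_le_potential_sub (M' := min M (a + Multiset.sum {x}))
      (by linarith) hM]
  · have hsmall := add_smallBonus_le_sum_map_add (p := 1 / 2 - a) (Multiset.card_pos.mp (by lia))
      (fun x hx => (htD x hx).le) h4 hδ (by linarith) (by linarith) (by rw [hDcard]; linarith)
    rw [hDcard] at hsmall
    rw [sum_map_bonus_of_le_quarter h4, bonus_of_le_half ha ha2]
    linarith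
  · linarith

lemma three_fifths_le_bonus_add_bonus (hta : 1 - M < a) (htb : 1 - M < b)
    (ha : 1 / 4 < a) (ha2 : a ≤ 1 / 2) (hb : 1 / 4 < b) (hb2 : b ≤ 1 / 2) :
    3 / 5 ≤ bonus a + bonus b + (potential M - potential (min M (a + b))) := by
  have hdrop := sub_le_potential_sub (min_le_left M (a + b))
  have hmin := min_le_left M (a + b)
  have hmin' := min_le_right M (a + b)
  suffices smallBonus (1 / 2 - a) + smallBonus (1 / 2 - b) ≤ 1 / 15 + (M - min M (a + b)) by
    rw [bonus_of_le_half ha ha2, bonus_of_le_half hb hb2]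
    linarith
  rcases le_total (1 / 2 - a) (5 / 48) with hpa | hpa
  · linarith [smallBonus_eq_zero hpa, smallBonus_le (1 / 2 - b)]
  rcases le_total (1 / 2 - b) (5 / 48) with hpb | hpb
  · linarith [smallBonus_eq_zero hpb, smallBonus_le (1 / 2 - a)]
  linarith [smallBonus_le_ramp hpa, smallBonus_le_ramp hpb]

lemma one_sub_card_div_five_le_of_forall_le_half (hB : B ≠ 0) (hcard : B.card < 5)
    (ht : ∀ x ∈ B, 1 - M < x) (h2 : ∀ x ∈ B, x ≤ 1 / 2) :
    1 - B.card / 5 ≤ (B.map bonus).sum + (potential M - potential (min M B.sum)) := by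
  by_cases h4 : ∀ x ∈ B, x ≤ 1 / 4
  · exact one_sub_card_div_five_le_of_forall_le_quarter hB hcard ht h4
  push Not at h4
  obtain ⟨a, ha, ha4⟩ := h4
  obtain ⟨D, rfl⟩ := Multiset.exists_cons_of_mem ha
  by_cases hD4 : ∀ x ∈ D, x ≤ 1 / 4
  · exact one_sub_card_div_five_le_of_cons hcard ht ha4 (h2 a ha) hD4
  push Not at hD4
  obtain ⟨b, hb, hb4⟩ := hD4
  obtain ⟨E, rfl⟩ := Multiset.exists_cons_of_mem hb
  have hb' : b ∈ a ::ₘ b ::ₘ E := Multiset.mem_cons_of_mem hb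
  rcases eq_or_ne E 0 with rfl | hE
  · have hpair := three_fifths_le_bonus_add_bonus (ht a ha) (ht b hb') ha4 (h2 a ha) hb4 (h2 b hb')
    norm_num
    linarith
  · have hE1 : (1 : ℝ) ≤ E.card := by exact_mod_cast Multiset.card_pos.mpr hE
    have hdrop := potential_mono (min_le_left M (a + (b + E.sum)))
    simp only [Multiset.card_cons, Nat.cast_succ, Multiset.map_cons, Multiset.sum_cons]
    linarith [le_bonus_of_quarter_lt ha4, le_bonus_of_quarter_lt hb4, sum_map_bonus_nonneg E]

lemma one_sub_card_div_five_le (hB : B ≠ 0) (hcard : B.card < 5) (ht : ∀ x ∈ B, 1 - M < x) :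
    1 - B.card / 5 ≤ (B.map bonus).sum + (potential M - potential (min M B.sum)) := by
  by_cases h2 : ∀ x ∈ B, x ≤ 1 / 2
  · exact one_sub_card_div_five_le_of_forall_le_half hB hcard ht h2
  push Not at h2
  obtain ⟨a, ha, ha2⟩ := h2
  have hcard1 : (1 : ℝ) ≤ B.card := by exact_mod_cast Multiset.card_pos.mpr hB
  have hdrop := potential_mono (min_le_left M B.sum)
  obtain ⟨D, rfl⟩ := Multiset.exists_cons_of_mem ha
  rw [Multiset.map_cons, Multiset.sum_cons, bonus_of_half_lt ha2]
  linarith [sum_map_bonus_nonneg D]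

end BonusLowerBound

theorem isPotential_potential : IsPotential 5 weight potential where
  nonneg _ := potential_nonneg
  one_le_of_full B hcard := by
    have hcard' : (5 : ℝ) ≤ B.card := by exact_mod_cast hcard
    rw [sum_map_weight]
    linarith [sum_map_bonus_nonneg B]
  one_le_of_not_full M B hB hcard ht := by
    rw [sum_map_weight]
    linarith [one_sub_card_div_five_le hB hcard ht]

/-- For k = 5 and every input `L`, FF(L) ≤ (32/15)·OPT(L) + 4: the
asymptotic competitive ratio of First Fit for k = 5 is at most 32/15. -/
theorem ff_k5_ub (L : List ℝ) (hL : ValidInput L) :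
    (FF 5 L : ℝ) ≤ (32 / 15 : ℝ) * (OPT 5 L : ℝ) + 4 := by
  have h := isPotential_potential.FF_le_mul_OPT_add (by norm_num) hL
    fun B hB => sum_map_weight_le fun x hx => (hB x hx).le
  rw [potential_one] at h
  linarith
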